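/- arXiv:1808.03384 — 2 statements merged into one kernel-verified Lean document; each statement's English description precedes it below -/
import Mathlib

section
/- There exists a constant C > 0, depending only on n, κ1 and C₀, such that for every x = (x', x_n) ∈ Ω₁ and all tangential indices α, β ∈ {1,…,n−1}: |∂_α∂_β ũ(x)| ≤ C·|φ(x') − ψ(x')|/(ε + |x'|²) + C·(|x'|/(ε + |x'|²) + 1)·(‖∇φ‖_∞ + ‖∇ψ‖_∞) + C·(‖∇²φ‖_∞ + ‖∇²ψ‖_∞); |∂_α∂_n ũ(x)| ≤ C·|x'|·|φ(x') − ψ(x')|/(ε + |x'|²)² + C·(‖∇φ‖_∞ + ‖∇ψ‖_∞)/(ε + |x'|²); and ∂_n∂_n ũ(x) = 0. -/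
open MeasureTheory Metric Finset

noncomputable section

/-- `ℝ^{n-1}`, the horizontal (tangential) variables `x'`. -/
abbrev Ep (n : ℕ) := EuclideanSpace ℝ (Fin (n - 1))

/-- `ℝ^n = ℝ^{n-1} × ℝ`, points written `x = (x', x_n)`. -/
abbrev Efull (n : ℕ) := Ep n × ℝ

/-- The narrow region `Ω_r`. -/
def Omega (n : ℕ) (ε : ℝ) (h1 h2 : Ep n → ℝ) (r : ℝ) : Set (Efull n) :=
  {x | ‖x.1‖ < r ∧ -ε/2 + h2 x.1 < x.2 ∧ x.2 < ε/2 + h1 x.1}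

/-- Top boundary `Γ_r⁺`. -/
def Gammap (n : ℕ) (ε : ℝ) (h1 : Ep n → ℝ) (r : ℝ) : Set (Efull n) :=
  {x | ‖x.1‖ ≤ r ∧ x.2 = ε/2 + h1 x.1}

/-- Bottom boundary `Γ_r⁻`. -/
def Gammam (n : ℕ) (ε : ℝ) (h2 : Ep n → ℝ) (r : ℝ) : Set (Efull n) :=
  {x | ‖x.1‖ ≤ r ∧ x.2 = -ε/2 + h2 x.1}

/-- `Ω̂_s(x₀) = {x ∈ Ω_{1/2} : |x' - x₀'| < s}`. -/
def OmegaHat (n : ℕ) (ε : ℝ) (h1 h2 : Ep n → ℝ) (x0 : Efull n) (s : ℝ) : Set (Efull n) :=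
  {x | x ∈ Omega n ε h1 h2 (1/2) ∧ ‖x.1 - x0.1‖ < s}

/-- The `n` coordinate directions of `ℝ^{n-1} × ℝ`: the first `n-1` are the horizontal
Euclidean basis vectors, the last is the vertical direction. -/
def dir (n : ℕ) (α : Fin n) : Efull n :=
  if h : (α : ℕ) < n - 1 then (EuclideanSpace.single (⟨(α : ℕ), h⟩ : Fin (n - 1)) 1, (0:ℝ))
  else (0, 1)

/-- Tangential direction `e_α` for `α ∈ {1, …, n-1}`. -/
def tang (n : ℕ) (α : Fin (n - 1)) : Efull n := (EuclideanSpace.single α 1, (0:ℝ))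

/-- Vertical direction `e_n`. -/
def vert (n : ℕ) : Efull n := (0, 1)

/-- Pointwise Laplacian `Δu = Σ_α ∂_α∂_α u`. -/
def lapl (n : ℕ) (u : Efull n → ℝ) (x : Efull n) : ℝ :=
  ∑ α : Fin n, fderiv ℝ (fun y => fderiv ℝ u y (dir n α)) x (dir n α)

/-- The auxiliary function `ū(x', x_n) = (x_n - h2(x') + ε/2)/(ε + h1(x') - h2(x'))`. -/
def ubar (n : ℕ) (ε : ℝ) (h1 h2 : Ep n → ℝ) (x : Efull n) : ℝ :=
  (x.2 - h2 x.1 + ε/2) / (ε + h1 x.1 - h2 x.1)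

/-- The auxiliary function `ũ = φ(x')·ū + ψ(x')·(1 - ū)`. -/
def util (n : ℕ) (ε : ℝ) (h1 h2 φ ψ : Ep n → ℝ) (x : Efull n) : ℝ :=
  φ x.1 * ubar n ε h1 h2 x + ψ x.1 * (1 - ubar n ε h1 h2 x)

/-- `C²`-norm on the closed unit ball: `sup_{|x'| ≤ 1} (|f| + |∇f| + |∇²f|)`. -/
def C2norm {F : Type*} [NormedAddCommGroup F] [NormedSpace ℝ F] (n : ℕ)
    (f : Ep n → F) : ℝ :=
  ⨆ y : closedBall (0 : Ep n) 1,
    (‖f (y : Ep n)‖ + ‖fderiv ℝ f (y : Ep n)‖ + ‖fderiv ℝ (fderiv ℝ f) (y : Ep n)‖)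

/-- `C²(S)`-norm of a function on `ℝ^n`. -/
def C2normOn (n : ℕ) (S : Set (Efull n)) (f : Efull n → ℝ) : ℝ :=
  ⨆ y : S,
    (‖f (y : Efull n)‖ + ‖fderiv ℝ f (y : Efull n)‖ + ‖fderiv ℝ (fderiv ℝ f) (y : Efull n)‖)

/-- `‖∇f‖_∞ = sup_{|x'| ≤ 1} |∇f(x')|`. -/
def gradSup {F : Type*} [NormedAddCommGroup F] [NormedSpace ℝ F] (n : ℕ) (f : Ep n → F) : ℝ :=
  ⨆ y : closedBall (0 : Ep n) 1, ‖fderiv ℝ f (y : Ep n)‖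

/-- `‖∇²f‖_∞ = sup_{|x'| ≤ 1} |∇²f(x')|`. -/
def hessSup {F : Type*} [NormedAddCommGroup F] [NormedSpace ℝ F] (n : ℕ) (f : Ep n → F) : ℝ :=
  ⨆ y : closedBall (0 : Ep n) 1, ‖fderiv ℝ (fderiv ℝ f) (y : Ep n)‖

/-- The geometric hypotheses on `h1, h2`: `C²` on the closed unit ball, the two graphs
do not touch, flatness at the origin, strict convexity of the gap, and `C²`-bound `κ1`. -/
def HGeom (n : ℕ) (ε κ0 κ1 : ℝ) (h1 h2 : Ep n → ℝ) : Prop :=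
  ContDiffOn ℝ 2 h1 (closedBall 0 1) ∧ ContDiffOn ℝ 2 h2 (closedBall 0 1) ∧
  (∀ y : Ep n, ‖y‖ ≤ 1 → -ε/2 + h2 y < ε/2 + h1 y) ∧
  h1 0 = 0 ∧ h2 0 = 0 ∧ fderiv ℝ h1 0 = 0 ∧ fderiv ℝ h2 0 = 0 ∧
  (∀ v : Ep n, κ0 * ‖v‖^2 ≤ fderiv ℝ (fderiv ℝ (fun y => h1 y - h2 y)) 0 v v) ∧
  C2norm n h1 + C2norm n h2 ≤ κ1

/-- Comparability `(ε + |x'|²)/C₀ ≤ δ(x') ≤ C₀ (ε + |x'|²)`. -/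
def DeltaComp (n : ℕ) (ε C₀ : ℝ) (h1 h2 : Ep n → ℝ) : Prop :=
  ∀ y : Ep n, ‖y‖ ≤ 1 →
    (ε + ‖y‖^2) / C₀ ≤ ε + h1 y - h2 y ∧ ε + h1 y - h2 y ≤ C₀ * (ε + ‖y‖^2)

/-- Hypotheses on the coefficients: `C²`-regularity with total `C²(Ω₁)`-norm at most `κ2`,
boundedness `|A| ≤ Λ`, and the weak ellipticity (Legendre) condition with constant `λ`. -/
def CoeffHyp (n N : ℕ) (ε lam Lam κ2 : ℝ) (h1 h2 : Ep n → ℝ)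
    (A : Fin n → Fin n → Fin N → Fin N → Efull n → ℝ)
    (B : Fin n → Fin N → Fin N → Efull n → ℝ)
    (Cc : Fin n → Fin N → Fin N → Efull n → ℝ)
    (Dc : Fin N → Fin N → Efull n → ℝ) : Prop :=
  (∀ α β i j, ContDiffOn ℝ 2 (A α β i j) (Omega n ε h1 h2 1)) ∧
  (∀ α i j, ContDiffOn ℝ 2 (B α i j) (Omega n ε h1 h2 1)) ∧
  (∀ β i j, ContDiffOn ℝ 2 (Cc β i j) (Omega n ε h1 h2 1)) ∧
  (∀ i j, ContDiffOn ℝ 2 (Dc i j) (Omega n ε h1 h2 1)) ∧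
  ((∑ α : Fin n, ∑ β : Fin n, ∑ i : Fin N, ∑ j : Fin N,
      C2normOn n (Omega n ε h1 h2 1) (A α β i j)) +
   (∑ α : Fin n, ∑ i : Fin N, ∑ j : Fin N, C2normOn n (Omega n ε h1 h2 1) (B α i j)) +
   (∑ β : Fin n, ∑ i : Fin N, ∑ j : Fin N, C2normOn n (Omega n ε h1 h2 1) (Cc β i j)) +
   (∑ i : Fin N, ∑ j : Fin N, C2normOn n (Omega n ε h1 h2 1) (Dc i j)) ≤ κ2) ∧
  (∀ α β i j, ∀ x ∈ Omega n ε h1 h2 1, |A α β i j x| ≤ Lam) ∧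
  (∀ ξ : Efull n → EuclideanSpace ℝ (Fin N), ContDiff ℝ (⊤ : ℕ∞) ξ →
    HasCompactSupport ξ → tsupport ξ ⊆ Omega n ε h1 h2 1 →
    lam * ∫ x in Omega n ε h1 h2 1, ‖fderiv ℝ ξ x‖^2 ≤
      ∫ x in Omega n ε h1 h2 1,
        ∑ α : Fin n, ∑ β : Fin n, ∑ i : Fin N, ∑ j : Fin N,
          A α β i j x * fderiv ℝ ξ x (dir n α) i * fderiv ℝ ξ x (dir n β) j)

/-- `u` is a weak solution of
`∂_α(A^{αβ}_{ij} ∂_β u^j + B^α_{ij} u^j) + C^β_{ij} ∂_β u^j + D_{ij} u^j = 0` in `Ω₁`. -/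
def WeakSol (n N : ℕ) (ε : ℝ) (h1 h2 : Ep n → ℝ)
    (A : Fin n → Fin n → Fin N → Fin N → Efull n → ℝ)
    (B : Fin n → Fin N → Fin N → Efull n → ℝ)
    (Cc : Fin n → Fin N → Fin N → Efull n → ℝ)
    (Dc : Fin N → Fin N → Efull n → ℝ)
    (u : Efull n → EuclideanSpace ℝ (Fin N)) : Prop :=
  ContDiffOn ℝ 1 u (Omega n ε h1 h2 1) ∧
  IntegrableOn (fun x => ‖u x‖^2 + ‖fderiv ℝ u x‖^2) (Omega n ε h1 h2 1) ∧
  ∀ ζ : Efull n → EuclideanSpace ℝ (Fin N), ContDiff ℝ (⊤ : ℕ∞) ζ →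
    HasCompactSupport ζ → tsupport ζ ⊆ Omega n ε h1 h2 1 →
    (∫ x in Omega n ε h1 h2 1,
      ((∑ α : Fin n, ∑ i : Fin N,
          ((∑ β : Fin n, ∑ j : Fin N, A α β i j x * fderiv ℝ u x (dir n β) j) +
            ∑ j : Fin N, B α i j x * u x j) * fderiv ℝ ζ x (dir n α) i) -
        ∑ i : Fin N,
          ((∑ β : Fin n, ∑ j : Fin N, Cc β i j x * fderiv ℝ u x (dir n β) j) +
            ∑ j : Fin N, Dc i j x * u x j) * ζ x i)) = 0

/-- `u` attains the boundary values `(φ, ψ)` on `Γ₁⁺` and `Γ₁⁻`. -/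
def AttainsBV {F : Type*} [NormedAddCommGroup F] [NormedSpace ℝ F] (n : ℕ) (ε : ℝ)
    (h1 h2 : Ep n → ℝ) (u : Efull n → F) (φ ψ : Ep n → F) : Prop :=
  ContinuousOn u (Omega n ε h1 h2 1 ∪ Gammap n ε h1 1 ∪ Gammam n ε h2 1) ∧
  (∀ y : Ep n, ‖y‖ ≤ 1 → u (y, ε/2 + h1 y) = φ y ∧ u (y, -ε/2 + h2 y) = ψ y)

/-- `u` is a harmonic function on `Ω₁` with boundary values `φ` on `Γ₁⁺` and `ψ` on `Γ₁⁻`. -/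
def HarmBV (n : ℕ) (ε : ℝ) (h1 h2 : Ep n → ℝ) (u : Efull n → ℝ) (φ ψ : Ep n → ℝ) : Prop :=
  ContDiffOn ℝ 2 u (Omega n ε h1 h2 1) ∧
  (∀ x ∈ Omega n ε h1 h2 1, lapl n u x = 0) ∧
  IntegrableOn (fun x => ‖u x‖^2 + ‖fderiv ℝ u x‖^2) (Omega n ε h1 h2 1) ∧
  AttainsBV n ε h1 h2 u φ ψ

/-!
With `b` and `t` the bottom and top graphs and `δ = t - b`, the identity `δ ū = x_n - b`,
differentiated once and twice, gives

* `δ ∂ū = ∂x_n - ((1 - ū) ∂b + ū ∂t)`,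
* `δ ∂∂'ū = -((1 - ū) ∂∂'b + ū ∂∂'t) - (∂δ ∂'ū + ∂'δ ∂ū)`.

As `0 ≤ ū ≤ 1`, the brackets are convex combinations. The gradients of `b` and `t` vanish at the
origin and their Hessians are bounded by `κ`, so `|∇b|, |∇t| ≤ κ|x'|`; since
`|x'|² ≤ ε + |x'|² ≤ C₀ δ`, this yields `∂_α ū = O(|x'|/δ)`, `∂_α∂_β ū = O(1/δ)`,
`∂_n ū = 1/δ`, `∂_α∂_n ū = O(|x'|/δ²)` and `∂_n∂_n ū = 0`. The estimates for `ũ` follow from the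
Leibniz rule for `ũ = ψ + (φ - ψ) ū`.

The suprema over the closed ball involve the unrestricted `fderiv` at boundary points, where a
function that is merely `C²` on the ball need not be differentiable. They are nevertheless finite:
there `fderiv` is either the junk value `0` or the one-sided derivative.
-/

open Set Filter Topology

section SecondDerivative

variable {𝕜 E F G : Type*} [NontriviallyNormedField 𝕜] [NormedAddCommGroup E] [NormedSpace 𝕜 E]
  [NormedAddCommGroup F] [NormedSpace 𝕜 F] [NormedAddCommGroup G] [NormedSpace 𝕜 G]
  {f g : E → F} {c : E → 𝕜} {x : E}

lemma eventually_differentiableAt_of_contDiffAt_two (hf : ContDiffAt 𝕜 2 f x) :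
    ∀ᶠ y in 𝓝 x, DifferentiableAt 𝕜 f y :=
  (hf.eventually (by simp)).mono fun _ hy => hy.differentiableAt two_ne_zero

lemma differentiableAt_fderiv_of_contDiffAt_two (hf : ContDiffAt 𝕜 2 f x) :
    DifferentiableAt 𝕜 (fderiv 𝕜 f) x :=
  (hf.fderiv_right (m := 1) (by norm_num)).differentiableAt one_ne_zero

lemma fderiv_fderiv_apply_const (hf : DifferentiableAt 𝕜 (fderiv 𝕜 f) x) (v w : E) :
    fderiv 𝕜 (fun y => fderiv 𝕜 f y v) x w = fderiv 𝕜 (fderiv 𝕜 f) x w v := by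
  simp [fderiv_clm_apply hf (differentiableAt_const v)]

lemma fderiv_fderiv_sub (hf : ContDiffAt 𝕜 2 f x) (hg : ContDiffAt 𝕜 2 g x) :
    fderiv 𝕜 (fderiv 𝕜 fun y => f y - g y) x =
      fderiv 𝕜 (fderiv 𝕜 f) x - fderiv 𝕜 (fderiv 𝕜 g) x := by
  have fderiv_eq : fderiv 𝕜 (fun y => f y - g y) =ᶠ[𝓝 x]
      fun y => fderiv 𝕜 f y - fderiv 𝕜 g y := by
    filter_upwards [eventually_differentiableAt_of_contDiffAt_two hf,
      eventually_differentiableAt_of_contDiffAt_two hg] with y hfy hgy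
    exact fderiv_fun_sub hfy hgy
  rw [fderiv_eq.fderiv_eq, fderiv_fun_sub (differentiableAt_fderiv_of_contDiffAt_two hf)
    (differentiableAt_fderiv_of_contDiffAt_two hg)]

lemma fderiv_fderiv_smul_apply (hc : ContDiffAt 𝕜 2 c x) (hf : ContDiffAt 𝕜 2 f x) (v w : E) :
    fderiv 𝕜 (fderiv 𝕜 fun y => c y • f y) x w v =
      c x • fderiv 𝕜 (fderiv 𝕜 f) x w v + fderiv 𝕜 c x w • fderiv 𝕜 f x v +
        fderiv 𝕜 c x v • fderiv 𝕜 f x w + fderiv 𝕜 (fderiv 𝕜 c) x w v • f x := by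
  have hcf : ContDiffAt 𝕜 2 (fun y => c y • f y) x := hc.smul hf
  have hc' := differentiableAt_fderiv_of_contDiffAt_two hc
  have hf' := differentiableAt_fderiv_of_contDiffAt_two hf
  have hc₁ := hc.differentiableAt two_ne_zero
  have hf₁ := hf.differentiableAt two_ne_zero
  have fderiv_apply_eq : (fun y => fderiv 𝕜 (fun y => c y • f y) y v) =ᶠ[𝓝 x]
      fun y => c y • fderiv 𝕜 f y v + fderiv 𝕜 c y v • f y := by
    filter_upwards [eventually_differentiableAt_of_contDiffAt_two hc,
      eventually_differentiableAt_of_contDiffAt_two hf] with y hcy hfy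
    simp [fderiv_fun_smul hcy hfy]
  have hfv : DifferentiableAt 𝕜 (fun y => fderiv 𝕜 f y v) x :=
    hf'.clm_apply (differentiableAt_const v)
  have hcv : DifferentiableAt 𝕜 (fun y => fderiv 𝕜 c y v) x :=
    hc'.clm_apply (differentiableAt_const v)
  rw [← fderiv_fderiv_apply_const (differentiableAt_fderiv_of_contDiffAt_two hcf),
    fderiv_apply_eq.fderiv_eq, fderiv_fun_add (hc₁.fun_smul hfv) (hcv.fun_smul hf₁),
    fderiv_fun_smul hc₁ hfv, fderiv_fun_smul hcv hf₁]
  simp only [add_apply, smul_apply, ContinuousLinearMap.smulRight_apply,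
    fderiv_fderiv_apply_const hf', fderiv_fderiv_apply_const hc']
  abel

lemma fderiv_comp_clm_apply {L : G →L[𝕜] E} {z : G} (hf : DifferentiableAt 𝕜 f (L z)) (v : G) :
    fderiv 𝕜 (fun y => f (L y)) z v = fderiv 𝕜 f (L z) (L v) := by
  rw [fderiv_fun_comp z hf L.differentiableAt, L.fderiv, ContinuousLinearMap.comp_apply]

lemma fderiv_fderiv_comp_clm_apply {L : G →L[𝕜] E} {z : G} (hf : ContDiffAt 𝕜 2 f (L z))
    (v w : G) :
    fderiv 𝕜 (fderiv 𝕜 fun y => f (L y)) z w v =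
      fderiv 𝕜 (fderiv 𝕜 f) (L z) (L w) (L v) := by
  have hf' := differentiableAt_fderiv_of_contDiffAt_two hf
  have hfL : ContDiffAt 𝕜 2 (fun y => f (L y)) z := hf.comp z L.contDiff.contDiffAt
  have fderiv_apply_eq : (fun y => fderiv 𝕜 (fun y => f (L y)) y v) =ᶠ[𝓝 z]
      fun y => fderiv 𝕜 f (L y) (L v) := by
    filter_upwards [L.continuous.continuousAt.eventually
      (eventually_differentiableAt_of_contDiffAt_two hf)] with y hy
    exact fderiv_comp_clm_apply hy v
  rw [← fderiv_fderiv_apply_const (differentiableAt_fderiv_of_contDiffAt_two hfL),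
    fderiv_apply_eq.fderiv_eq,
    fderiv_comp_clm_apply (f := fun y => fderiv 𝕜 f y (L v))
      (hf'.clm_apply (differentiableAt_const (L v))),
    fderiv_fderiv_apply_const hf']

end SecondDerivative

section Quotient

lemma eventuallyEq_smul_div {X 𝕜 : Type*} [TopologicalSpace X] [NormedField 𝕜] {f g : X → 𝕜}
    {x : X} (hg : ContinuousAt g x) (hgx : g x ≠ 0) :
    (fun y => g y • (f y / g y)) =ᶠ[𝓝 x] f := by
  filter_upwards [hg.eventually_ne hgx] with y hy
  exact mul_div_cancel₀ (f y) hy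

variable {𝕜 E : Type*} [NontriviallyNormedField 𝕜] [NormedAddCommGroup E] [NormedSpace 𝕜 E]
  {f g : E → 𝕜} {x : E}

lemma mul_fderiv_div_apply (hf : DifferentiableAt 𝕜 f x) (hg : DifferentiableAt 𝕜 g x)
    (hgx : g x ≠ 0) (v : E) :
    g x * fderiv 𝕜 (fun y => f y / g y) x v = fderiv 𝕜 f x v - f x / g x * fderiv 𝕜 g x v := by
  have hfg : DifferentiableAt 𝕜 (fun y => f y / g y) x := by
    simpa only [div_eq_mul_inv] using hf.fun_mul (hg.fun_inv hgx)
  have leibniz := DFunLike.congr_fun (fderiv_fun_smul hg hfg) v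
  rw [(eventuallyEq_smul_div hg.continuousAt hgx).fderiv_eq] at leibniz
  simp only [add_apply, smul_apply, ContinuousLinearMap.smulRight_apply, smul_eq_mul] at leibniz
  linear_combination -leibniz

lemma mul_fderiv_fderiv_div_apply (hf : ContDiffAt 𝕜 2 f x) (hg : ContDiffAt 𝕜 2 g x)
    (hgx : g x ≠ 0) (v w : E) :
    g x * fderiv 𝕜 (fderiv 𝕜 fun y => f y / g y) x w v =
      fderiv 𝕜 (fderiv 𝕜 f) x w v - fderiv 𝕜 g x w * fderiv 𝕜 (fun y => f y / g y) x v -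
        fderiv 𝕜 g x v * fderiv 𝕜 (fun y => f y / g y) x w -
        f x / g x * fderiv 𝕜 (fderiv 𝕜 g) x w v := by
  have leibniz := fderiv_fderiv_smul_apply hg (hf.fun_div hg hgx) v w
  rw [(eventuallyEq_smul_div hg.continuousAt hgx).fderiv.fderiv_eq] at leibniz
  simp only [smul_eq_mul] at leibniz
  linear_combination -leibniz

end Quotient

section BoundedDerivatives

variable {E F : Type*} [NormedAddCommGroup E] [NormedSpace ℝ E] [NormedAddCommGroup F]
  [NormedSpace ℝ F] {f : E → F} {s : Set E} {x : E}

lemma norm_fderiv_le_norm_fderivWithin (hs : UniqueDiffWithinAt ℝ s x) :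
    ‖fderiv ℝ f x‖ ≤ ‖fderivWithin ℝ f s x‖ := by
  by_cases hf : DifferentiableAt ℝ f x
  · rw [hf.fderivWithin hs]
  · simp [fderiv_zero_of_not_differentiableAt hf]

lemma eqOn_fderiv_fderivWithin_interior :
    EqOn (fderiv ℝ f) (fderivWithin ℝ f s) (interior s) :=
  fun _ hy => (fderivWithin_of_mem_nhds (mem_interior_iff_mem_nhds.1 hy)).symm

lemma fderiv_eq_fderivWithin_of_mem_closure_interior (hx : x ∈ closure (interior s))
    (hf : ContinuousAt (fderiv ℝ f) x) (hfs : ContinuousWithinAt (fderivWithin ℝ f s) s x) :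
    fderiv ℝ f x = fderivWithin ℝ f s x := by
  have := mem_closure_iff_nhdsWithin_neBot.1 hx
  have hlim : Tendsto (fderivWithin ℝ f s) (𝓝[interior s] x) (𝓝 (fderivWithin ℝ f s x)) :=
    hfs.mono interior_subset
  refine tendsto_nhds_unique hf.continuousWithinAt (hlim.congr' ?_)
  exact eqOn_fderiv_fderivWithin_interior.symm.eventuallyEq_nhdsWithin

lemma norm_fderiv_fderiv_le_norm_fderivWithin_fderivWithin (hs : Convex ℝ s)
    (hs₀ : (interior s).Nonempty) (hf : ContDiffOn ℝ 2 f s) (hx : x ∈ s) :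
    ‖fderiv ℝ (fderiv ℝ f) x‖ ≤ ‖fderivWithin ℝ (fderivWithin ℝ f s) s x‖ := by
  by_cases hf' : DifferentiableAt ℝ (fderiv ℝ f) x
  · have hfs : ContDiffOn ℝ 1 (fderivWithin ℝ f s) s :=
      hf.fderivWithin (uniqueDiffOn_convex hs hs₀) (by norm_num)
    have hx' : x ∈ closure (interior s) := by
      rw [hs.closure_interior_eq_closure_of_nonempty_interior hs₀]
      exact subset_closure hx
    have hu : UniqueDiffWithinAt ℝ (interior s) x :=
      uniqueDiffWithinAt_convex hs.interior (by rwa [interior_interior]) hx'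
    have hfx : fderiv ℝ f x = fderivWithin ℝ f s x :=
      fderiv_eq_fderivWithin_of_mem_closure_interior hx' hf'.continuousAt (hfs.continuousOn x hx)
    rw [← hf'.fderivWithin hu, fderivWithin_congr eqOn_fderiv_fderivWithin_interior hfx,
      fderivWithin_subset interior_subset hu (hfs.differentiableOn one_ne_zero x hx)]
  · rw [fderiv_zero_of_not_differentiableAt hf']
    exact ContinuousLinearMap.opNorm_zero.trans_le (ContinuousLinearMap.opNorm_nonneg _)

lemma bddAbove_norm_fderiv_of_contDiffOn (hs : Convex ℝ s) (hs₀ : (interior s).Nonempty)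
    (hsc : IsCompact s) (hf : ContDiffOn ℝ 1 f s) :
    BddAbove (range fun y : s => ‖fderiv ℝ f y‖) := by
  have hu := uniqueDiffOn_convex hs hs₀
  obtain ⟨M, hM⟩ := hsc.exists_bound_of_continuousOn
    (hf.continuousOn_fderivWithin hu le_rfl)
  refine ⟨M, forall_mem_range.2 fun y => ?_⟩
  exact (norm_fderiv_le_norm_fderivWithin (hu y y.2)).trans (hM y y.2)

lemma bddAbove_norm_fderiv_fderiv_of_contDiffOn (hs : Convex ℝ s) (hs₀ : (interior s).Nonempty)
    (hsc : IsCompact s) (hf : ContDiffOn ℝ 2 f s) :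
    BddAbove (range fun y : s => ‖fderiv ℝ (fderiv ℝ f) y‖) := by
  have hu := uniqueDiffOn_convex hs hs₀
  have hfs : ContDiffOn ℝ 1 (fderivWithin ℝ f s) s := hf.fderivWithin hu (by norm_num)
  obtain ⟨M, hM⟩ := hsc.exists_bound_of_continuousOn
    (hfs.continuousOn_fderivWithin hu le_rfl)
  refine ⟨M, forall_mem_range.2 fun y => ?_⟩
  exact (norm_fderiv_fderiv_le_norm_fderivWithin_fderivWithin hs hs₀ hf y.2).trans (hM y y.2)

end BoundedDerivatives

section UnitBallNorms

variable {F : Type*} [NormedAddCommGroup F] [NormedSpace ℝ F] {n : ℕ} {f : Ep n → F} {y : Ep n}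

lemma nonempty_interior_closedBall_Ep : (interior (closedBall (0 : Ep n) 1)).Nonempty :=
  ⟨0, ball_subset_interior_closedBall (mem_ball_self one_pos)⟩

lemma norm_fderiv_le_gradSup (hf : ContDiffOn ℝ 1 f (closedBall 0 1))
    (hy : y ∈ closedBall (0 : Ep n) 1) : ‖fderiv ℝ f y‖ ≤ gradSup n f :=
  le_ciSup (bddAbove_norm_fderiv_of_contDiffOn (convex_closedBall 0 1)
    nonempty_interior_closedBall_Ep (isCompact_closedBall 0 1) hf) ⟨y, hy⟩

lemma norm_fderiv_fderiv_le_hessSup (hf : ContDiffOn ℝ 2 f (closedBall 0 1))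
    (hy : y ∈ closedBall (0 : Ep n) 1) : ‖fderiv ℝ (fderiv ℝ f) y‖ ≤ hessSup n f :=
  le_ciSup (bddAbove_norm_fderiv_fderiv_of_contDiffOn (convex_closedBall 0 1)
    nonempty_interior_closedBall_Ep (isCompact_closedBall 0 1) hf) ⟨y, hy⟩

lemma bddAbove_range_C2norm (hf : ContDiffOn ℝ 2 f (closedBall 0 1)) :
    BddAbove (range fun y : closedBall (0 : Ep n) 1 =>
      ‖f y‖ + ‖fderiv ℝ f y‖ + ‖fderiv ℝ (fderiv ℝ f) y‖) := by
  have hc : IsCompact (closedBall (0 : Ep n) 1) := isCompact_closedBall 0 1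
  have hf₀ : BddAbove (range fun y : closedBall (0 : Ep n) 1 => ‖f y‖) := by
    simpa only [image_eq_range] using hc.bddAbove_image hf.continuousOn.norm
  have hf₁ := bddAbove_norm_fderiv_of_contDiffOn (convex_closedBall 0 1)
    nonempty_interior_closedBall_Ep hc (hf.of_le one_le_two)
  have hf₂ := bddAbove_norm_fderiv_fderiv_of_contDiffOn (convex_closedBall 0 1)
    nonempty_interior_closedBall_Ep hc hf
  exact (hf₀.range_add hf₁).range_add hf₂

lemma norm_fderiv_fderiv_le_C2norm (hf : ContDiffOn ℝ 2 f (closedBall 0 1))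
    (hy : y ∈ closedBall (0 : Ep n) 1) : ‖fderiv ℝ (fderiv ℝ f) y‖ ≤ C2norm n f :=
  (le_add_of_nonneg_left (by positivity)).trans (le_ciSup (bddAbove_range_C2norm hf) ⟨y, hy⟩)

lemma C2norm_nonneg : 0 ≤ C2norm n f := Real.iSup_nonneg fun _ => by positivity

end UnitBallNorms

section Band

variable {X : Type*}

/-- The relative height `(x_n - b) / (t - b)` of the point `x = (x', x_n)` above the graph of `b`,
measured against the graph of `t`; it is `ū` for `b = -ε/2 + h2` and `t = ε/2 + h1`. -/
def relHeight (b t : X → ℝ) (x : X × ℝ) : ℝ := (x.2 - b x.1) / (t x.1 - b x.1)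

/-- The function that is affine in `x_n` and equals `ψ` on the graph of `b` and `φ` on the graph of
`t`; it is `ũ` for `b = -ε/2 + h2` and `t = ε/2 + h1`. -/
def graphInterp (b t φ ψ : X → ℝ) (x : X × ℝ) : ℝ :=
  φ x.1 * relHeight b t x + ψ x.1 * (1 - relHeight b t x)

lemma relHeight_mem_Icc {b t : X → ℝ} {x : X × ℝ} (hx : x.2 ∈ Icc (b x.1) (t x.1)) :
    relHeight b t x ∈ Icc (0 : ℝ) 1 := by
  obtain ⟨hbx, hxt⟩ := hx
  exact ⟨div_nonneg (by linarith) (by linarith), div_le_one_of_le₀ (by linarith) (by linarith)⟩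

variable {E : Type*} [NormedAddCommGroup E] [NormedSpace ℝ E]

/-- Pointwise control, at a point `x` between the graphs of `b` and `t`, of the gap from below by
`d`, and of the gradients and Hessians of `b` and `t` from above by `m` and `K`. -/
structure BandControlAt (b t : E → ℝ) (x : E × ℝ) (d m K : ℝ) : Prop where
  contDiffAt_bottom : ContDiffAt ℝ 2 b x.1
  contDiffAt_top : ContDiffAt ℝ 2 t x.1
  mem_Icc : x.2 ∈ Icc (b x.1) (t x.1)
  pos : 0 < d
  le_gap : d ≤ t x.1 - b x.1
  norm_fderiv_bottom_le : ‖fderiv ℝ b x.1‖ ≤ m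
  norm_fderiv_top_le : ‖fderiv ℝ t x.1‖ ≤ m
  norm_fderiv_fderiv_bottom_le : ‖fderiv ℝ (fderiv ℝ b) x.1‖ ≤ K
  norm_fderiv_fderiv_top_le : ‖fderiv ℝ (fderiv ℝ t) x.1‖ ≤ K

/-- A `C²` function on the unit ball whose gradient vanishes at the origin and whose Hessian is
bounded by `κ`: the regularity required of the two boundary graphs. -/
structure IsFlatOnUnitBall (κ : ℝ) (f : E → ℝ) : Prop where
  contDiffOn : ContDiffOn ℝ 2 f (ball 0 1)
  fderiv_zero : fderiv ℝ f 0 = 0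
  norm_fderiv_fderiv_le : ∀ y ∈ ball (0 : E) 1, ‖fderiv ℝ (fderiv ℝ f) y‖ ≤ κ

section Derivatives

variable {b t φ ψ : E → ℝ} {x : E × ℝ}

lemma fderiv_comp_fst_apply (hφ : DifferentiableAt ℝ φ x.1) (v : E × ℝ) :
    fderiv ℝ (fun y : E × ℝ => φ y.1) x v = fderiv ℝ φ x.1 v.1 :=
  fderiv_comp_clm_apply (L := ContinuousLinearMap.fst ℝ E ℝ) hφ v

lemma fderiv_fderiv_comp_fst_apply (hφ : ContDiffAt ℝ 2 φ x.1) (v w : E × ℝ) :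
    fderiv ℝ (fderiv ℝ fun y : E × ℝ => φ y.1) x w v = fderiv ℝ (fderiv ℝ φ) x.1 w.1 v.1 :=
  fderiv_fderiv_comp_clm_apply (L := ContinuousLinearMap.fst ℝ E ℝ) hφ v w

lemma fderiv_sub_comp_fst_apply (hφ : DifferentiableAt ℝ φ x.1) (hψ : DifferentiableAt ℝ ψ x.1)
    (v : E × ℝ) :
    fderiv ℝ (fun y : E × ℝ => φ y.1 - ψ y.1) x v = fderiv ℝ φ x.1 v.1 - fderiv ℝ ψ x.1 v.1 := by
  have hφ' : DifferentiableAt ℝ (fun y : E × ℝ => φ y.1) x := hφ.comp x differentiableAt_fst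
  have hψ' : DifferentiableAt ℝ (fun y : E × ℝ => ψ y.1) x := hψ.comp x differentiableAt_fst
  rw [fderiv_fun_sub hφ' hψ', sub_apply, fderiv_comp_fst_apply hφ, fderiv_comp_fst_apply hψ]

lemma fderiv_fderiv_sub_comp_fst_apply (hφ : ContDiffAt ℝ 2 φ x.1) (hψ : ContDiffAt ℝ 2 ψ x.1)
    (v w : E × ℝ) :
    fderiv ℝ (fderiv ℝ fun y : E × ℝ => φ y.1 - ψ y.1) x w v =
      fderiv ℝ (fderiv ℝ φ) x.1 w.1 v.1 - fderiv ℝ (fderiv ℝ ψ) x.1 w.1 v.1 := by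
  rw [fderiv_fderiv_sub hφ.fst'' hψ.fst'', sub_apply, sub_apply,
    fderiv_fderiv_comp_fst_apply hφ, fderiv_fderiv_comp_fst_apply hψ]

lemma fderiv_snd_sub_comp_fst_apply (hb : DifferentiableAt ℝ b x.1) (v : E × ℝ) :
    fderiv ℝ (fun y : E × ℝ => y.2 - b y.1) x v = v.2 - fderiv ℝ b x.1 v.1 := by
  have hb' : DifferentiableAt ℝ (fun y : E × ℝ => b y.1) x := hb.comp x differentiableAt_fst
  rw [fderiv_fun_sub differentiableAt_snd hb', sub_apply, fderiv_snd, fderiv_comp_fst_apply hb,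
    ContinuousLinearMap.coe_snd']

lemma fderiv_fderiv_snd_sub_comp_fst_apply (hb : ContDiffAt ℝ 2 b x.1) (v w : E × ℝ) :
    fderiv ℝ (fderiv ℝ fun y : E × ℝ => y.2 - b y.1) x w v =
      -fderiv ℝ (fderiv ℝ b) x.1 w.1 v.1 := by
  have fderiv_snd_eq : fderiv ℝ (Prod.snd : E × ℝ → ℝ) = fun _ => ContinuousLinearMap.snd ℝ E ℝ :=
    funext fun _ => fderiv_snd
  rw [fderiv_fderiv_sub contDiffAt_snd hb.fst'', sub_apply, sub_apply,
    fderiv_fderiv_comp_fst_apply hb, fderiv_snd_eq]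
  simp

lemma contDiffAt_relHeight (hb : ContDiffAt ℝ 2 b x.1) (ht : ContDiffAt ℝ 2 t x.1)
    (hgap : t x.1 - b x.1 ≠ 0) : ContDiffAt ℝ 2 (relHeight b t) x :=
  (contDiffAt_snd.sub hb.fst'').div (ht.fst''.sub hb.fst'') hgap

lemma contDiffAt_graphInterp (hb : ContDiffAt ℝ 2 b x.1) (ht : ContDiffAt ℝ 2 t x.1)
    (hgap : t x.1 - b x.1 ≠ 0) (hφ : ContDiffAt ℝ 2 φ x.1) (hψ : ContDiffAt ℝ 2 ψ x.1) :
    ContDiffAt ℝ 2 (graphInterp b t φ ψ) x :=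
  have hu := contDiffAt_relHeight hb ht hgap
  (hφ.fst''.mul hu).add (hψ.fst''.mul (contDiffAt_const.sub hu))

lemma gap_mul_fderiv_relHeight_apply (hb : DifferentiableAt ℝ b x.1)
    (ht : DifferentiableAt ℝ t x.1) (hgap : t x.1 - b x.1 ≠ 0) (v : E × ℝ) :
    (t x.1 - b x.1) * fderiv ℝ (relHeight b t) x v =
      v.2 - ((1 - relHeight b t x) * fderiv ℝ b x.1 v.1 +
        relHeight b t x * fderiv ℝ t x.1 v.1) := by
  have hb' : DifferentiableAt ℝ (fun y : E × ℝ => b y.1) x := hb.comp x differentiableAt_fst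
  have ht' : DifferentiableAt ℝ (fun y : E × ℝ => t y.1) x := ht.comp x differentiableAt_fst
  have quotient_rule :=
    mul_fderiv_div_apply (differentiableAt_snd.fun_sub hb') (ht'.fun_sub hb') hgap v
  rw [fderiv_snd_sub_comp_fst_apply hb, fderiv_sub_comp_fst_apply ht hb] at quotient_rule
  unfold relHeight
  linear_combination quotient_rule

lemma gap_mul_fderiv_fderiv_relHeight_apply (hb : ContDiffAt ℝ 2 b x.1)
    (ht : ContDiffAt ℝ 2 t x.1) (hgap : t x.1 - b x.1 ≠ 0) (v w : E × ℝ) :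
    (t x.1 - b x.1) * fderiv ℝ (fderiv ℝ (relHeight b t)) x w v =
      -((1 - relHeight b t x) * fderiv ℝ (fderiv ℝ b) x.1 w.1 v.1 +
          relHeight b t x * fderiv ℝ (fderiv ℝ t) x.1 w.1 v.1) -
        ((fderiv ℝ t x.1 w.1 - fderiv ℝ b x.1 w.1) * fderiv ℝ (relHeight b t) x v +
          (fderiv ℝ t x.1 v.1 - fderiv ℝ b x.1 v.1) * fderiv ℝ (relHeight b t) x w) := by
  have quotient_rule := mul_fderiv_fderiv_div_apply (f := fun y : E × ℝ => y.2 - b y.1)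
    (contDiffAt_snd.sub hb.fst'') (ht.fst''.sub hb.fst'') hgap v w
  have hb' := hb.differentiableAt two_ne_zero
  have ht' := ht.differentiableAt two_ne_zero
  rw [fderiv_fderiv_snd_sub_comp_fst_apply hb, fderiv_sub_comp_fst_apply ht' hb',
    fderiv_sub_comp_fst_apply ht' hb', fderiv_fderiv_sub_comp_fst_apply ht hb] at quotient_rule
  unfold relHeight
  linear_combination quotient_rule

lemma fderiv_fderiv_graphInterp_apply (hb : ContDiffAt ℝ 2 b x.1) (ht : ContDiffAt ℝ 2 t x.1)
    (hgap : t x.1 - b x.1 ≠ 0) (hφ : ContDiffAt ℝ 2 φ x.1) (hψ : ContDiffAt ℝ 2 ψ x.1)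
    (v w : E × ℝ) :
    fderiv ℝ (fderiv ℝ (graphInterp b t φ ψ)) x w v =
      (φ x.1 - ψ x.1) * fderiv ℝ (fderiv ℝ (relHeight b t)) x w v +
        ((fderiv ℝ φ x.1 w.1 - fderiv ℝ ψ x.1 w.1) * fderiv ℝ (relHeight b t) x v +
          (fderiv ℝ φ x.1 v.1 - fderiv ℝ ψ x.1 v.1) * fderiv ℝ (relHeight b t) x w) +
        ((1 - relHeight b t x) * fderiv ℝ (fderiv ℝ ψ) x.1 w.1 v.1 +
          relHeight b t x * fderiv ℝ (fderiv ℝ φ) x.1 w.1 v.1) := by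
  have hu := contDiffAt_relHeight hb ht hgap
  have hψφ : ContDiffAt ℝ 2 (fun y : E × ℝ => ψ y.1 - φ y.1) x := hψ.fst''.sub hφ.fst''
  have hψφu : ContDiffAt ℝ 2 (fun y : E × ℝ => (ψ y.1 - φ y.1) • relHeight b t y) x := hψφ.smul hu
  have hφ' := hφ.differentiableAt two_ne_zero
  have hψ' := hψ.differentiableAt two_ne_zero
  have graphInterp_eq : graphInterp b t φ ψ =
      fun y => ψ y.1 - (ψ y.1 - φ y.1) • relHeight b t y := by
    funext y
    simp only [graphInterp, smul_eq_mul]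
    ring
  rw [graphInterp_eq, fderiv_fderiv_sub hψ.fst'' hψφu, sub_apply, sub_apply,
    fderiv_fderiv_comp_fst_apply hψ, fderiv_fderiv_smul_apply hψφ hu,
    fderiv_sub_comp_fst_apply hψ' hφ', fderiv_sub_comp_fst_apply hψ' hφ',
    fderiv_fderiv_sub_comp_fst_apply hψ hφ]
  simp only [smul_eq_mul]
  ring

end Derivatives

section Estimates

lemma abs_le_div_of_abs_mul_le {d g z M : ℝ} (hd : 0 < d) (hdg : d ≤ g) (h : |g * z| ≤ M) :
    |z| ≤ M / d := by
  rw [abs_mul, abs_of_pos (hd.trans_le hdg)] at h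
  rw [le_div_iff₀' hd]
  exact (mul_le_mul_of_nonneg_right hdg (abs_nonneg z)).trans h

lemma abs_mul_le_mul {p q P Q : ℝ} (hp : |p| ≤ P) (hq : |q| ≤ Q) : |p * q| ≤ P * Q :=
  (abs_mul p q).trans_le (mul_le_mul hp hq (abs_nonneg q) ((abs_nonneg p).trans hp))

lemma abs_sub_le_add {p q P Q : ℝ} (hp : |p| ≤ P) (hq : |q| ≤ Q) : |p - q| ≤ P + Q :=
  (abs_sub p q).trans (add_le_add hp hq)

lemma abs_add_le_add {p q P Q : ℝ} (hp : |p| ≤ P) (hq : |q| ≤ Q) : |p + q| ≤ P + Q :=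
  (abs_add_le p q).trans (add_le_add hp hq)

lemma abs_convex_combination_le {u p q M : ℝ} (hu : u ∈ Icc (0 : ℝ) 1) (hp : |p| ≤ M)
    (hq : |q| ≤ M) : |(1 - u) * p + u * q| ≤ M :=
  abs_le.2 <| convex_Icc (-M) M (abs_le.1 hp) (abs_le.1 hq) (sub_nonneg.2 hu.2) hu.1
    (sub_add_cancel 1 u)

lemma abs_fderiv_sub_fderiv_apply_le {φ ψ : E → ℝ} {y e : E} {G : ℝ}
    (hG : ‖fderiv ℝ φ y‖ + ‖fderiv ℝ ψ y‖ ≤ G) (he : ‖e‖ ≤ 1) :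
    |fderiv ℝ φ y e - fderiv ℝ ψ y e| ≤ G :=
  (abs_sub_le_add ((fderiv ℝ φ y).unit_le_opNorm e he)
    ((fderiv ℝ ψ y).unit_le_opNorm e he)).trans hG

end Estimates

namespace BandControlAt

variable {b t φ ψ : E → ℝ} {x : E × ℝ} {d m K G H : ℝ} {e f : E}

lemma gap_ne_zero (h : BandControlAt b t x d m K) : t x.1 - b x.1 ≠ 0 :=
  (h.pos.trans_le h.le_gap).ne'

lemma differentiableAt_bottom (h : BandControlAt b t x d m K) : DifferentiableAt ℝ b x.1 :=
  h.contDiffAt_bottom.differentiableAt two_ne_zero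

lemma differentiableAt_top (h : BandControlAt b t x d m K) : DifferentiableAt ℝ t x.1 :=
  h.contDiffAt_top.differentiableAt two_ne_zero

lemma abs_fderiv_bottom_le (h : BandControlAt b t x d m K) (he : ‖e‖ ≤ 1) :
    |fderiv ℝ b x.1 e| ≤ m := by
  simpa using (fderiv ℝ b x.1).le_of_opNorm_le_of_le h.norm_fderiv_bottom_le he

lemma abs_fderiv_top_le (h : BandControlAt b t x d m K) (he : ‖e‖ ≤ 1) :
    |fderiv ℝ t x.1 e| ≤ m := by
  simpa using (fderiv ℝ t x.1).le_of_opNorm_le_of_le h.norm_fderiv_top_le he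

lemma abs_fderiv_gap_le (h : BandControlAt b t x d m K) (he : ‖e‖ ≤ 1) :
    |fderiv ℝ t x.1 e - fderiv ℝ b x.1 e| ≤ 2 * m :=
  (abs_sub_le_add (h.abs_fderiv_top_le he) (h.abs_fderiv_bottom_le he)).trans_eq (two_mul m).symm

lemma abs_fderiv_relHeight_horizontal_le (h : BandControlAt b t x d m K) (he : ‖e‖ ≤ 1) :
    |fderiv ℝ (relHeight b t) x (e, 0)| ≤ m / d := by
  refine abs_le_div_of_abs_mul_le h.pos h.le_gap ?_
  rw [gap_mul_fderiv_relHeight_apply h.differentiableAt_bottom h.differentiableAt_top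
    h.gap_ne_zero, zero_sub, abs_neg]
  exact abs_convex_combination_le (relHeight_mem_Icc h.mem_Icc) (h.abs_fderiv_bottom_le he)
    (h.abs_fderiv_top_le he)

lemma abs_fderiv_relHeight_vertical_le (h : BandControlAt b t x d m K) :
    |fderiv ℝ (relHeight b t) x (0, 1)| ≤ 1 / d := by
  refine abs_le_div_of_abs_mul_le h.pos h.le_gap ?_
  simp [gap_mul_fderiv_relHeight_apply h.differentiableAt_bottom h.differentiableAt_top
    h.gap_ne_zero]

lemma abs_fderiv_fderiv_relHeight_horizontal_le (h : BandControlAt b t x d m K) (he : ‖e‖ ≤ 1)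
    (hf : ‖f‖ ≤ 1) :
    |fderiv ℝ (fderiv ℝ (relHeight b t)) x (e, 0) (f, 0)| ≤ (K + 4 * m ^ 2 / d) / d := by
  have hessian_bottom : |fderiv ℝ (fderiv ℝ b) x.1 e f| ≤ K := by
    simpa using ContinuousLinearMap.le_of_opNorm₂_le_of_le _ h.norm_fderiv_fderiv_bottom_le he hf
  have hessian_top : |fderiv ℝ (fderiv ℝ t) x.1 e f| ≤ K := by
    simpa using ContinuousLinearMap.le_of_opNorm₂_le_of_le _ h.norm_fderiv_fderiv_top_le he hf
  refine abs_le_div_of_abs_mul_le h.pos h.le_gap ?_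
  rw [gap_mul_fderiv_fderiv_relHeight_apply h.contDiffAt_bottom h.contDiffAt_top h.gap_ne_zero]
  refine (abs_sub_le_add ((abs_neg _).trans_le <| abs_convex_combination_le
      (relHeight_mem_Icc h.mem_Icc) hessian_bottom hessian_top)
    (abs_add_le_add
      (abs_mul_le_mul (h.abs_fderiv_gap_le he) (h.abs_fderiv_relHeight_horizontal_le hf))
      (abs_mul_le_mul (h.abs_fderiv_gap_le hf)
        (h.abs_fderiv_relHeight_horizontal_le he)))).trans_eq ?_
  ring

lemma abs_fderiv_fderiv_relHeight_mixed_le (h : BandControlAt b t x d m K) (he : ‖e‖ ≤ 1) :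
    |fderiv ℝ (fderiv ℝ (relHeight b t)) x (e, 0) (0, 1)| ≤ 2 * m / d ^ 2 := by
  have bound : |fderiv ℝ (fderiv ℝ (relHeight b t)) x (e, 0) (0, 1)| ≤ 2 * m * (1 / d) / d := by
    refine abs_le_div_of_abs_mul_le h.pos h.le_gap ?_
    rw [gap_mul_fderiv_fderiv_relHeight_apply h.contDiffAt_bottom h.contDiffAt_top h.gap_ne_zero]
    simpa only [map_zero, mul_zero, add_zero, neg_zero, zero_sub, sub_zero, zero_mul, abs_neg]
      using abs_mul_le_mul (h.abs_fderiv_gap_le he) h.abs_fderiv_relHeight_vertical_le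
  exact bound.trans_eq (by ring)

lemma fderiv_fderiv_relHeight_vertical_eq_zero (h : BandControlAt b t x d m K) :
    fderiv ℝ (fderiv ℝ (relHeight b t)) x (0, 1) (0, 1) = 0 := by
  refine (mul_eq_zero.1 ?_).resolve_left h.gap_ne_zero
  simp [gap_mul_fderiv_fderiv_relHeight_apply h.contDiffAt_bottom h.contDiffAt_top h.gap_ne_zero]

lemma abs_fderiv_fderiv_graphInterp_horizontal_le (h : BandControlAt b t x d m K)
    (hφ : ContDiffAt ℝ 2 φ x.1) (hψ : ContDiffAt ℝ 2 ψ x.1)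
    (hG : ‖fderiv ℝ φ x.1‖ + ‖fderiv ℝ ψ x.1‖ ≤ G)
    (hH : ‖fderiv ℝ (fderiv ℝ φ) x.1‖ + ‖fderiv ℝ (fderiv ℝ ψ) x.1‖ ≤ H)
    (he : ‖e‖ ≤ 1) (hf : ‖f‖ ≤ 1) :
    |fderiv ℝ (fderiv ℝ (graphInterp b t φ ψ)) x (e, 0) (f, 0)| ≤
      |φ x.1 - ψ x.1| * ((K + 4 * m ^ 2 / d) / d) + 2 * (m / d) * G + H := by
  have hessian_le {χ : E → ℝ} (hχ : ‖fderiv ℝ (fderiv ℝ χ) x.1‖ ≤ H) :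
      |fderiv ℝ (fderiv ℝ χ) x.1 e f| ≤ H := by
    simpa using ContinuousLinearMap.le_of_opNorm₂_le_of_le _ hχ he hf
  have hHφ : ‖fderiv ℝ (fderiv ℝ φ) x.1‖ ≤ H :=
    (le_add_of_nonneg_right (ContinuousLinearMap.opNorm_nonneg _)).trans hH
  have hHψ : ‖fderiv ℝ (fderiv ℝ ψ) x.1‖ ≤ H :=
    (le_add_of_nonneg_left (ContinuousLinearMap.opNorm_nonneg _)).trans hH
  rw [fderiv_fderiv_graphInterp_apply h.contDiffAt_bottom h.contDiffAt_top h.gap_ne_zero hφ hψ]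
  refine (abs_add_le_add
    (abs_add_le_add (abs_mul_le_mul le_rfl (h.abs_fderiv_fderiv_relHeight_horizontal_le he hf))
      (abs_add_le_add
        (abs_mul_le_mul (abs_fderiv_sub_fderiv_apply_le hG he)
          (h.abs_fderiv_relHeight_horizontal_le hf))
        (abs_mul_le_mul (abs_fderiv_sub_fderiv_apply_le hG hf)
          (h.abs_fderiv_relHeight_horizontal_le he))))
    (abs_convex_combination_le (relHeight_mem_Icc h.mem_Icc) (hessian_le hHψ)
      (hessian_le hHφ))).trans_eq ?_
  ring

lemma abs_fderiv_fderiv_graphInterp_mixed_le (h : BandControlAt b t x d m K)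
    (hφ : ContDiffAt ℝ 2 φ x.1) (hψ : ContDiffAt ℝ 2 ψ x.1)
    (hG : ‖fderiv ℝ φ x.1‖ + ‖fderiv ℝ ψ x.1‖ ≤ G) (he : ‖e‖ ≤ 1) :
    |fderiv ℝ (fderiv ℝ (graphInterp b t φ ψ)) x (e, 0) (0, 1)| ≤
      |φ x.1 - ψ x.1| * (2 * m / d ^ 2) + G * (1 / d) := by
  rw [fderiv_fderiv_graphInterp_apply h.contDiffAt_bottom h.contDiffAt_top h.gap_ne_zero hφ hψ]
  simpa only [map_zero, mul_zero, add_zero, sub_zero, zero_mul] using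
    abs_add_le_add (abs_mul_le_mul le_rfl (h.abs_fderiv_fderiv_relHeight_mixed_le he))
      (abs_mul_le_mul (abs_fderiv_sub_fderiv_apply_le hG he) h.abs_fderiv_relHeight_vertical_le)

lemma fderiv_fderiv_graphInterp_vertical_eq_zero (h : BandControlAt b t x d m K)
    (hφ : ContDiffAt ℝ 2 φ x.1) (hψ : ContDiffAt ℝ 2 ψ x.1) :
    fderiv ℝ (fderiv ℝ (graphInterp b t φ ψ)) x (0, 1) (0, 1) = 0 := by
  simp [fderiv_fderiv_graphInterp_apply h.contDiffAt_bottom h.contDiffAt_top h.gap_ne_zero hφ hψ,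
    h.fderiv_fderiv_relHeight_vertical_eq_zero]

end BandControlAt

namespace IsFlatOnUnitBall

variable {κ : ℝ} {f : E → ℝ} {y : E}

lemma contDiffAt (h : IsFlatOnUnitBall κ f) (hy : y ∈ ball 0 1) : ContDiffAt ℝ 2 f y :=
  h.contDiffOn.contDiffAt (isOpen_ball.mem_nhds hy)

lemma const_add (h : IsFlatOnUnitBall κ f) (c : ℝ) : IsFlatOnUnitBall κ fun y => c + f y := by
  have fderiv_eq : fderiv ℝ (fun y => c + f y) = fderiv ℝ f := funext fun _ => fderiv_const_add c
  exact ⟨contDiffOn_const.add h.contDiffOn, by rw [fderiv_eq, h.fderiv_zero],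
    by simpa only [fderiv_eq] using h.norm_fderiv_fderiv_le⟩

lemma norm_fderiv_le (h : IsFlatOnUnitBall κ f) (hy : y ∈ ball 0 1) :
    ‖fderiv ℝ f y‖ ≤ κ * ‖y‖ := by
  simpa [h.fderiv_zero] using (convex_ball (0 : E) 1).norm_image_sub_le_of_norm_fderiv_le
    (fun z hz => differentiableAt_fderiv_of_contDiffAt_two (h.contDiffAt hz))
    h.norm_fderiv_fderiv_le (mem_ball_self one_pos) hy

lemma bandControlAt {b t : E → ℝ} {x : E × ℝ} {d : ℝ} (hb : IsFlatOnUnitBall κ b)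
    (ht : IsFlatOnUnitBall κ t) (hx : x.1 ∈ ball 0 1) (hx' : x.2 ∈ Icc (b x.1) (t x.1))
    (hd : 0 < d) (hgap : d ≤ t x.1 - b x.1) : BandControlAt b t x d (κ * ‖x.1‖) κ where
  contDiffAt_bottom := hb.contDiffAt hx
  contDiffAt_top := ht.contDiffAt hx
  mem_Icc := hx'
  pos := hd
  le_gap := hgap
  norm_fderiv_bottom_le := hb.norm_fderiv_le hx
  norm_fderiv_top_le := ht.norm_fderiv_le hx
  norm_fderiv_fderiv_bottom_le := hb.norm_fderiv_fderiv_le x.1 hx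
  norm_fderiv_fderiv_top_le := ht.norm_fderiv_fderiv_le x.1 hx

end IsFlatOnUnitBall

section Constants

variable {A G H C C₀ κ r s : ℝ}

lemma horizontal_bound_le (hA : 0 ≤ A) (hG : 0 ≤ G) (hH : 0 ≤ H) (hr : 0 ≤ r) (hs : 0 < s)
    (hrs : r ^ 2 ≤ s) (hC₀ : 0 < C₀) (hC₁ : 1 ≤ C) (hC₂ : C₀ * (κ + 4 * κ ^ 2 * C₀) ≤ C)
    (hC₃ : 2 * κ * C₀ ≤ C) :
    A * ((κ + 4 * (κ * r) ^ 2 / (s / C₀)) / (s / C₀)) + 2 * (κ * r / (s / C₀)) * G + H ≤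
      C * A / s + C * (r / s + 1) * G + C * H := by
  have hrs' : r ^ 2 / s ≤ 1 := (div_le_one hs).2 hrs
  have value_term : A * ((κ + 4 * (κ * r) ^ 2 / (s / C₀)) / (s / C₀)) ≤ C * A / s :=
    calc A * ((κ + 4 * (κ * r) ^ 2 / (s / C₀)) / (s / C₀))
        = C₀ * (κ + 4 * κ ^ 2 * C₀ * (r ^ 2 / s)) * A / s := by field_simp
      _ ≤ C₀ * (κ + 4 * κ ^ 2 * C₀ * 1) * A / s := by gcongr
      _ ≤ C * A / s := by rw [mul_one]; gcongr
  have gradient_term : 2 * (κ * r / (s / C₀)) * G ≤ C * (r / s + 1) * G :=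
    calc 2 * (κ * r / (s / C₀)) * G = 2 * κ * C₀ * (r / s) * G := by field_simp
      _ ≤ C * (r / s + 1) * G := by
        gcongr
        linarith
  linarith [le_mul_of_one_le_left hH hC₁]

lemma mixed_bound_le (hA : 0 ≤ A) (hG : 0 ≤ G) (hr : 0 ≤ r) (hs : 0 < s) (hC₁ : C₀ ≤ C)
    (hC₂ : 2 * κ * C₀ ^ 2 ≤ C) :
    A * (2 * (κ * r) / (s / C₀) ^ 2) + G * (1 / (s / C₀)) ≤ C * r * A / s ^ 2 + C * G / s :=
  calc A * (2 * (κ * r) / (s / C₀) ^ 2) + G * (1 / (s / C₀))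
      = 2 * κ * C₀ ^ 2 * r * A / s ^ 2 + C₀ * G / s := by field_simp
    _ ≤ C * r * A / s ^ 2 + C * G / s := by gcongr

end Constants

theorem stmt9_general {κ C₀ : ℝ} (hκ : 0 ≤ κ) (hC₀ : 0 < C₀) :
    ∃ C : ℝ, 0 < C ∧
      ∀ b t : E → ℝ, IsFlatOnUnitBall κ b → IsFlatOnUnitBall κ t →
        ∀ ε > 0, ∀ x : E × ℝ, x.1 ∈ ball 0 1 → x.2 ∈ Icc (b x.1) (t x.1) →
        (ε + ‖x.1‖ ^ 2) / C₀ ≤ t x.1 - b x.1 →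
        ∀ φ ψ : E → ℝ, ContDiffAt ℝ 2 φ x.1 → ContDiffAt ℝ 2 ψ x.1 →
        ∀ G H : ℝ, ‖fderiv ℝ φ x.1‖ + ‖fderiv ℝ ψ x.1‖ ≤ G →
          ‖fderiv ℝ (fderiv ℝ φ) x.1‖ + ‖fderiv ℝ (fderiv ℝ ψ) x.1‖ ≤ H →
        ∀ e f : E, ‖e‖ ≤ 1 → ‖f‖ ≤ 1 →
          |fderiv ℝ (fun y => fderiv ℝ (graphInterp b t φ ψ) y (f, 0)) x (e, 0)| ≤
            C * |φ x.1 - ψ x.1| / (ε + ‖x.1‖ ^ 2) + C * (‖x.1‖ / (ε + ‖x.1‖ ^ 2) + 1) * G +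
              C * H ∧
          |fderiv ℝ (fun y => fderiv ℝ (graphInterp b t φ ψ) y (0, 1)) x (e, 0)| ≤
            C * ‖x.1‖ * |φ x.1 - ψ x.1| / (ε + ‖x.1‖ ^ 2) ^ 2 + C * G / (ε + ‖x.1‖ ^ 2) ∧
          fderiv ℝ (fun y => fderiv ℝ (graphInterp b t φ ψ) y (0, 1)) x (0, 1) = 0 := by
  have hc₁ : 0 ≤ C₀ * (κ + 4 * κ ^ 2 * C₀) := by positivity
  have hc₂ : 0 ≤ 2 * κ * C₀ := by positivity
  have hc₃ : 0 ≤ 2 * κ * C₀ ^ 2 := by positivity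
  refine ⟨1 + C₀ + C₀ * (κ + 4 * κ ^ 2 * C₀) + 2 * κ * C₀ + 2 * κ * C₀ ^ 2, by positivity, ?_⟩
  intro b t hb ht ε hε x hx hx' hgap φ ψ hφ hψ G H hG hH e f he hf
  have hs : 0 < ε + ‖x.1‖ ^ 2 := by positivity
  have h := hb.bandControlAt ht hx hx' (div_pos hs hC₀) hgap
  have hG₀ : 0 ≤ G := le_trans (by positivity) hG
  have hH₀ : 0 ≤ H := le_trans
    (add_nonneg (ContinuousLinearMap.opNorm_nonneg _) (ContinuousLinearMap.opNorm_nonneg _)) hH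
  have iterated_eq := fderiv_fderiv_apply_const <| differentiableAt_fderiv_of_contDiffAt_two <|
    contDiffAt_graphInterp h.contDiffAt_bottom h.contDiffAt_top h.gap_ne_zero hφ hψ
  rw [iterated_eq, iterated_eq, iterated_eq]
  refine ⟨(h.abs_fderiv_fderiv_graphInterp_horizontal_le hφ hψ hG hH he hf).trans ?_,
    (h.abs_fderiv_fderiv_graphInterp_mixed_le hφ hψ hG he).trans ?_,
    h.fderiv_fderiv_graphInterp_vertical_eq_zero hφ hψ⟩
  · exact horizontal_bound_le (abs_nonneg _) hG₀ hH₀ (norm_nonneg _) hs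
      (le_add_of_nonneg_left hε.le) hC₀ (by linarith) (by linarith) (by linarith)
  · exact mixed_bound_le (abs_nonneg _) hG₀ (norm_nonneg _) hs (by linarith) (by linarith)

end Band

section NarrowRegion

variable {n : ℕ} {ε κ0 κ1 : ℝ} {h1 h2 : Ep n → ℝ}

lemma util_eq_graphInterp (ε : ℝ) (h1 h2 φ ψ : Ep n → ℝ) :
    util n ε h1 h2 φ ψ = graphInterp (fun y => -ε / 2 + h2 y) (fun y => ε / 2 + h1 y) φ ψ := by
  have ubar_eq : ubar n ε h1 h2 =
      relHeight (fun y => -ε / 2 + h2 y) (fun y => ε / 2 + h1 y) := by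
    funext x
    unfold ubar relHeight
    congr 1 <;> ring
  funext x
  rw [util, graphInterp, ubar_eq]

lemma isFlatOnUnitBall_of_C2norm_le {κ : ℝ} {h : Ep n → ℝ}
    (hh : ContDiffOn ℝ 2 h (closedBall 0 1)) (hh₀ : fderiv ℝ h 0 = 0) (hκ : C2norm n h ≤ κ) :
    IsFlatOnUnitBall κ h where
  contDiffOn := hh.mono ball_subset_closedBall
  fderiv_zero := hh₀
  norm_fderiv_fderiv_le _ hy :=
    (norm_fderiv_fderiv_le_C2norm hh (ball_subset_closedBall hy)).trans hκ

lemma isFlatOnUnitBall_of_hGeom (h : HGeom n ε κ0 κ1 h1 h2) :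
    IsFlatOnUnitBall κ1 h1 ∧ IsFlatOnUnitBall κ1 h2 := by
  obtain ⟨hh1, hh2, -, -, -, hh1₀, hh2₀, -, hκ1⟩ := h
  exact ⟨
    isFlatOnUnitBall_of_C2norm_le hh1 hh1₀ ((le_add_of_nonneg_right C2norm_nonneg).trans hκ1),
    isFlatOnUnitBall_of_C2norm_le hh2 hh2₀ ((le_add_of_nonneg_left C2norm_nonneg).trans hκ1)⟩

end NarrowRegion

theorem stmt9 (n : ℕ) (hn : 2 ≤ n) (κ1 C₀ : ℝ) (hκ1 : 0 < κ1) (hC₀ : 1 ≤ C₀) :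
    ∃ C : ℝ, 0 < C ∧
      ∀ κ0 : ℝ, 0 < κ0 → ∀ ε ∈ Set.Ioo (0:ℝ) 1, ∀ h1 h2 : Ep n → ℝ,
        HGeom n ε κ0 κ1 h1 h2 → DeltaComp n ε C₀ h1 h2 →
        ∀ φ ψ : Ep n → ℝ,
          ContDiffOn ℝ 2 φ (closedBall 0 1) → ContDiffOn ℝ 2 ψ (closedBall 0 1) →
        ∀ x ∈ Omega n ε h1 h2 1, ∀ α β : Fin (n - 1),
          |fderiv ℝ (fun y => fderiv ℝ (util n ε h1 h2 φ ψ) y (tang n β)) x (tang n α)| ≤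
            C * |φ x.1 - ψ x.1| / (ε + ‖x.1‖^2) +
            C * (‖x.1‖ / (ε + ‖x.1‖^2) + 1) * (gradSup n φ + gradSup n ψ) +
            C * (hessSup n φ + hessSup n ψ) ∧
          |fderiv ℝ (fun y => fderiv ℝ (util n ε h1 h2 φ ψ) y (vert n)) x (tang n α)| ≤
            C * ‖x.1‖ * |φ x.1 - ψ x.1| / (ε + ‖x.1‖^2)^2 +
            C * (gradSup n φ + gradSup n ψ) / (ε + ‖x.1‖^2) ∧
          fderiv ℝ (fun y => fderiv ℝ (util n ε h1 h2 φ ψ) y (vert n)) x (vert n) = 0 := by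
  obtain ⟨C, hC, bound⟩ := stmt9_general (E := Ep n) hκ1.le (one_pos.trans_le hC₀)
  refine ⟨C, hC, fun κ0 _ ε hε h1 h2 hG hδ φ ψ hφ hψ x ⟨hx, hbot, htop⟩ α β => ?_⟩
  obtain ⟨hh1, hh2⟩ := isFlatOnUnitBall_of_hGeom hG
  have hx₁ : x.1 ∈ ball 0 1 := mem_ball_zero_iff.2 hx
  have hx₂ := ball_subset_closedBall hx₁
  have hnhds := closedBall_mem_nhds_of_mem hx₁
  rw [util_eq_graphInterp]
  exact bound _ _ (hh2.const_add _) (hh1.const_add _) ε hε.1 x hx₁ ⟨hbot.le, htop.le⟩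
    ((hδ x.1 hx.le).1.trans_eq (by ring)) φ ψ (hφ.contDiffAt hnhds) (hψ.contDiffAt hnhds) _ _
    (add_le_add (norm_fderiv_le_gradSup (hφ.of_le one_le_two) hx₂)
      (norm_fderiv_le_gradSup (hψ.of_le one_le_two) hx₂))
    (add_le_add (norm_fderiv_fderiv_le_hessSup hφ hx₂) (norm_fderiv_fderiv_le_hessSup hψ hx₂))
    (EuclideanSpace.single α 1) (EuclideanSpace.single β 1) (by simp) (by simp)
end
end

section
/- There exists a constant C > 0, depending only on C₀, such that the following fiberwise Poincaré inequality holds: for every x₀ = (x₀', x₀,n) ∈ Ω_{1/2}, every s ∈ (0, 1/2], and every function w : Ω₁ → ℝ^m that is C¹ on Ω₁, extends continuously to each closed vertical fiber with w(x', −ε/2 + h2(x')) = 0 for |x'| < 1/2 (i.e., w vanishes on the bottom boundary Γ⁻), and for which |w|² and |∇w|² are integrable on Ω̂_s(x₀), one has ∫_{Ω̂_s(x₀)} |w(x)|² dx ≤ C ∫_{Ω̂_s(x₀)} (ε + |x'|²)² |∇w(x)|² dx. -/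
open MeasureTheory Metric Finset

noncomputable section

/-!
On a vertical fiber `(a, b)` a `C¹` function `g` with `g(a⁺) = 0` satisfies
`|g(t)| ≤ ∫ |g'| ≤ (b - a)^(1 - 1/p) ‖g'‖_p` by the fundamental theorem of calculus and Hölder,
hence `‖g‖_p ≤ (b - a) ‖g'‖_p`. Here `b - a = δ(x') ≤ C₀ (ε + |x'|²)` and `|∂ₙw| ≤ |∇w|`; raising
to the power `p` and integrating over `x'` by Tonelli gives the inequality with constant `C₀^p`.
Lower integrals are used on the fibers because `∂ₙw` need not be integrable on each of them.
-/

open Filter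
open scoped Topology ENNReal NNReal

section Interval

variable {F : Type*} [NormedAddCommGroup F] [NormedSpace ℝ F] {g : ℝ → F} {a b : ℝ}

lemma enorm_le_lintegral_enorm_deriv_of_tendsto_zero (hg : ContDiffOn ℝ 1 g (Set.Ioo a b))
    (hg₀ : Tendsto g (𝓝[>] a) (𝓝 0)) {t : ℝ} (ht : t ∈ Set.Ioo a b) :
    ‖g t‖ₑ ≤ ∫⁻ τ in Set.Ioo a b, ‖deriv g τ‖ₑ := by
  -- `deriv g` may be unbounded near `a`: compare on `[u, t]` and let `u → a`.
  have hlim : Tendsto (fun u => ‖g t - g u‖ₑ) (𝓝[>] a) (𝓝 ‖g t‖ₑ) := by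
    simpa only [sub_zero] using (hg₀.const_sub (g t)).enorm
  refine le_of_tendsto hlim ?_
  filter_upwards [Ioo_mem_nhdsGT ht.1] with u hu
  have hsub : Set.Icc u t ⊆ Set.Ioo a b := Set.Icc_subset_Ioo hu.1 ht.2
  exact (enorm_sub_le_lintegral_deriv_of_contDiffOn_Icc (hg.mono hsub) hu.2.le).trans
    (lintegral_mono_set hsub)

lemma eLpNorm_le_mul_eLpNorm_deriv_of_tendsto_zero (hg : ContDiffOn ℝ 1 g (Set.Ioo a b))
    (hg₀ : Tendsto g (𝓝[>] a) (𝓝 0)) {p : ℝ≥0∞} (hp : 1 ≤ p) :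
    eLpNorm g p (volume.restrict (Set.Ioo a b)) ≤
      ENNReal.ofReal (b - a) * eLpNorm (deriv g) p (volume.restrict (Set.Ioo a b)) := by
  set ν := volume.restrict (Set.Ioo a b) with hν
  have hν_univ : ν Set.univ = ENNReal.ofReal (b - a) := by simp [hν]
  have hmeas : AEStronglyMeasurable (deriv g) ν :=
    (hg.continuousOn_deriv_of_isOpen isOpen_Ioo le_rfl).aestronglyMeasurable measurableSet_Ioo
  have hbound : ∀ᵐ t ∂ν, ‖g t‖ₑ ≤ eLpNorm (deriv g) 1 ν := by
    filter_upwards [ae_restrict_mem measurableSet_Ioo] with t ht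
    rw [eLpNorm_one_eq_lintegral_enorm]
    exact enorm_le_lintegral_enorm_deriv_of_tendsto_zero hg hg₀ ht
  have hexp : 0 ≤ 1 - p.toReal⁻¹ := by
    rw [← ENNReal.toReal_inv, sub_nonneg]
    exact ENNReal.toReal_mono ENNReal.one_ne_top (ENNReal.inv_le_one.2 hp)
  calc eLpNorm g p ν
      ≤ eLpNorm (deriv g) 1 ν * ν Set.univ ^ p.toReal⁻¹ := eLpNorm_le_of_ae_enorm_bound hbound
    _ ≤ eLpNorm (deriv g) p ν * ν Set.univ ^ (1 - p.toReal⁻¹) * ν Set.univ ^ p.toReal⁻¹ := by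
        gcongr
        simpa using eLpNorm_le_eLpNorm_mul_rpow_measure_univ hp hmeas
    _ = ENNReal.ofReal (b - a) * eLpNorm (deriv g) p ν := by
        rw [mul_assoc, ← ENNReal.rpow_add_of_nonneg _ _ hexp (by positivity), sub_add_cancel,
          ENNReal.rpow_one, hν_univ, mul_comm]

lemma lintegral_enorm_rpow_le_of_tendsto_zero (hg : ContDiffOn ℝ 1 g (Set.Ioo a b))
    (hg₀ : Tendsto g (𝓝[>] a) (𝓝 0)) {p : ℝ} (hp : 1 ≤ p) :
    ∫⁻ t in Set.Ioo a b, ‖g t‖ₑ ^ p ≤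
      ENNReal.ofReal (b - a) ^ p * ∫⁻ t in Set.Ioo a b, ‖deriv g t‖ₑ ^ p := by
  lift p to ℝ≥0 using zero_le_one.trans hp
  have hp' : (1 : ℝ≥0) ≤ p := hp
  have hp_ne_zero : p ≠ 0 := (zero_lt_one.trans_le hp').ne'
  simp only [← eLpNorm_nnreal_pow_eq_lintegral hp_ne_zero]
  rw [← ENNReal.mul_rpow_of_nonneg _ _ p.coe_nonneg]
  gcongr
  exact eLpNorm_le_mul_eLpNorm_deriv_of_tendsto_zero hg hg₀ (mod_cast hp')

end Interval

section RegionBetween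

lemma isOpen_regionBetween {α : Type*} [TopologicalSpace α] {f g : α → ℝ} {s : Set α}
    (hs : IsOpen s) (hf : ContinuousOn f s) (hg : ContinuousOn g s) :
    IsOpen (regionBetween f g s) := by
  have hfst : Set.MapsTo Prod.fst (Prod.fst ⁻¹' s : Set (α × ℝ)) s := Set.mapsTo_preimage _ _
  have hbot : ContinuousOn (fun x : α × ℝ => x.2 - f x.1) (Prod.fst ⁻¹' s) :=
    continuousOn_snd.sub (hf.comp continuousOn_fst hfst)
  have htop : ContinuousOn (fun x : α × ℝ => g x.1 - x.2) (Prod.fst ⁻¹' s) :=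
    (hg.comp continuousOn_fst hfst).sub continuousOn_snd
  convert (hbot.prodMk htop).isOpen_inter_preimage (hs.preimage continuous_fst)
    (isOpen_Ioi.prod isOpen_Ioi : IsOpen (Set.Ioi (0 : ℝ) ×ˢ Set.Ioi (0 : ℝ))) using 1
  ext x
  simp [regionBetween]

lemma setLIntegral_regionBetween {α : Type*} [MeasurableSpace α] {μ : Measure α} [SFinite μ]
    {f g : α → ℝ} {s : Set α} (hs : MeasurableSet s) (hD : MeasurableSet (regionBetween f g s))
    {u : α × ℝ → ℝ≥0∞} (hu : AEMeasurable u ((μ.prod volume).restrict (regionBetween f g s))) :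
    ∫⁻ x in regionBetween f g s, u x ∂(μ.prod volume) =
      ∫⁻ y in s, (∫⁻ t in Set.Ioo (f y) (g y), u (y, t)) ∂μ := by
  rw [← lintegral_indicator hD, lintegral_prod _ ((aemeasurable_indicator_iff hD).mpr hu),
    ← lintegral_indicator hs]
  refine lintegral_congr fun y => ?_
  by_cases hy : y ∈ s
  · rw [Set.indicator_of_mem hy, ← lintegral_indicator measurableSet_Ioo]
    refine lintegral_congr fun t => ?_
    simp [Set.indicator, regionBetween, hy]
  · simp [regionBetween, hy]

variable {E F : Type*} [NormedAddCommGroup E] [NormedSpace ℝ E] [NormedAddCommGroup F]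
  [NormedSpace ℝ F] {w : E × ℝ → F} {f g : E → ℝ} {s : Set E}

lemma deriv_comp_prodMk_right {y : E} {t : ℝ} (hw : DifferentiableAt ℝ w (y, t)) :
    deriv (fun τ => w (y, τ)) t = fderiv ℝ w (y, t) (0, 1) :=
  (hw.hasFDerivAt.comp_hasDerivAt t ((hasDerivAt_const t y).prodMk (hasDerivAt_id t))).deriv

lemma lintegral_fiber_enorm_rpow_le (hD : IsOpen (regionBetween f g s))
    (hw : ContDiffOn ℝ 1 w (regionBetween f g s)) {y : E} (hy : y ∈ s)
    (hw₀ : Tendsto (fun t => w (y, t)) (𝓝[>] f y) (𝓝 0)) {p : ℝ} (hp : 1 ≤ p) :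
    ∫⁻ t in Set.Ioo (f y) (g y), ‖w (y, t)‖ₑ ^ p ≤
      ∫⁻ t in Set.Ioo (f y) (g y),
        (ENNReal.ofReal (g y - f y) * ‖fderiv ℝ w (y, t) (0, 1)‖ₑ) ^ p := by
  have hmaps : Set.MapsTo (fun t => (y, t)) (Set.Ioo (f y) (g y)) (regionBetween f g s) :=
    fun t ht => ⟨hy, ht⟩
  have hderiv : ∀ t ∈ Set.Ioo (f y) (g y),
      deriv (fun τ => w (y, τ)) t = fderiv ℝ w (y, t) (0, 1) := fun t ht =>
    deriv_comp_prodMk_right <|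
      (hw.differentiableOn one_ne_zero).differentiableAt (hD.mem_nhds (hmaps ht))
  have hp₀ : 0 ≤ p := zero_le_one.trans hp
  calc ∫⁻ t in Set.Ioo (f y) (g y), ‖w (y, t)‖ₑ ^ p
      ≤ ENNReal.ofReal (g y - f y) ^ p *
          ∫⁻ t in Set.Ioo (f y) (g y), ‖deriv (fun τ => w (y, τ)) t‖ₑ ^ p :=
        lintegral_enorm_rpow_le_of_tendsto_zero (hw.comp (by fun_prop) hmaps) hw₀ hp
    _ = ∫⁻ t in Set.Ioo (f y) (g y),
          (ENNReal.ofReal (g y - f y) * ‖deriv (fun τ => w (y, τ)) t‖ₑ) ^ p := by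
        simp only [ENNReal.mul_rpow_of_nonneg _ _ hp₀]
        rw [lintegral_const_mul' _ _ (by finiteness)]
    _ = _ := setLIntegral_congr_fun measurableSet_Ioo fun t ht => by simp only [hderiv t ht]

variable [MeasurableSpace E] [OpensMeasurableSpace E] [SecondCountableTopology E]
  {μ : Measure E} [SFinite μ]

lemma setLIntegral_regionBetween_enorm_rpow_le (hs : IsOpen s) (hf : ContinuousOn f s)
    (hg : ContinuousOn g s) (hw : ContDiffOn ℝ 1 w (regionBetween f g s))
    (hw₀ : ∀ y ∈ s, Tendsto (fun t => w (y, t)) (𝓝[>] f y) (𝓝 0)) {p : ℝ} (hp : 1 ≤ p) :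
    ∫⁻ x in regionBetween f g s, ‖w x‖ₑ ^ p ∂(μ.prod volume) ≤
      ∫⁻ x in regionBetween f g s,
        (ENNReal.ofReal (g x.1 - f x.1) * ‖fderiv ℝ w x (0, 1)‖ₑ) ^ p ∂(μ.prod volume) := by
  have hD : IsOpen (regionBetween f g s) := isOpen_regionBetween hs hf hg
  have hfst : Set.MapsTo Prod.fst (regionBetween f g s) s := fun _ hx => hx.1
  have hgap : ContinuousOn (fun x : E × ℝ => g x.1 - f x.1) (regionBetween f g s) :=
    (hg.comp continuousOn_fst hfst).sub (hf.comp continuousOn_fst hfst)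
  have hvert : ContinuousOn (fun x => fderiv ℝ w x (0, 1)) (regionBetween f g s) :=
    (hw.continuousOn_fderiv_of_isOpen hD le_rfl).clm_apply continuousOn_const
  have hDm := hD.measurableSet
  have hlhs : AEMeasurable (fun x => ‖w x‖ₑ ^ p)
      ((μ.prod volume).restrict (regionBetween f g s)) :=
    (hw.continuousOn.aestronglyMeasurable hDm).enorm.pow_const p
  have hrhs : AEMeasurable
      (fun x => (ENNReal.ofReal (g x.1 - f x.1) * ‖fderiv ℝ w x (0, 1)‖ₑ) ^ p)
      ((μ.prod volume).restrict (regionBetween f g s)) :=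
    ((hgap.aemeasurable hDm).ennreal_ofReal.mul
      (hvert.aestronglyMeasurable hDm).enorm).pow_const p
  rw [setLIntegral_regionBetween hs.measurableSet hDm hlhs,
    setLIntegral_regionBetween hs.measurableSet hDm hrhs]
  exact setLIntegral_mono' hs.measurableSet fun y hy =>
    lintegral_fiber_enorm_rpow_le hD hw hy (hw₀ y hy) hp

lemma setIntegral_regionBetween_norm_rpow_le (hs : IsOpen s) (hf : ContinuousOn f s)
    (hg : ContinuousOn g s) (hw : ContDiffOn ℝ 1 w (regionBetween f g s))
    (hw₀ : ∀ y ∈ s, Tendsto (fun t => w (y, t)) (𝓝[>] f y) (𝓝 0)) {p : ℝ} (hp : 1 ≤ p)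
    {ρ : E → ℝ} (hρ : ∀ y ∈ s, g y - f y ≤ ρ y)
    (hint : IntegrableOn (fun x => (ρ x.1 * ‖fderiv ℝ w x‖) ^ p) (regionBetween f g s)
      (μ.prod volume)) :
    ∫ x in regionBetween f g s, ‖w x‖ ^ p ∂(μ.prod volume) ≤
      ∫ x in regionBetween f g s, (ρ x.1 * ‖fderiv ℝ w x‖) ^ p ∂(μ.prod volume) := by
  have hDm := (isOpen_regionBetween hs hf hg).measurableSet
  have hp₀ : 0 ≤ p := zero_le_one.trans hp
  have hρ₀ : ∀ x ∈ regionBetween f g s, 0 ≤ ρ x.1 := fun x hx =>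
    (sub_nonneg.2 (hx.2.1.trans hx.2.2).le).trans (hρ x.1 hx.1)
  have hvert (x : E × ℝ) : ‖fderiv ℝ w x (0, 1)‖ₑ ≤ ENNReal.ofReal ‖fderiv ℝ w x‖ := by
    rw [← ofReal_norm]
    refine ENNReal.ofReal_le_ofReal ?_
    -- `(0, 1)` is a unit vector for the sup norm of `E × ℝ`.
    simpa using (fderiv ℝ w x).le_opNorm (0, 1)
  have hrhs₀ : 0 ≤ᵐ[(μ.prod volume).restrict (regionBetween f g s)]
      fun x => (ρ x.1 * ‖fderiv ℝ w x‖) ^ p := by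
    filter_upwards [ae_restrict_mem hDm] with x hx
    exact Real.rpow_nonneg (mul_nonneg (hρ₀ x hx) (norm_nonneg _)) p
  rw [integral_eq_lintegral_of_nonneg_ae (ae_of_all _ fun x => by positivity)
      ((hw.continuousOn.norm.rpow_const fun _ _ => .inr hp₀).aestronglyMeasurable hDm),
    integral_eq_lintegral_of_nonneg_ae hrhs₀ hint.aestronglyMeasurable]
  refine ENNReal.toReal_mono hint.lintegral_lt_top.ne ?_
  simp only [← ENNReal.ofReal_rpow_of_nonneg (norm_nonneg _) hp₀, ofReal_norm]
  refine (setLIntegral_regionBetween_enorm_rpow_le hs hf hg hw hw₀ hp).trans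
    (setLIntegral_mono' hDm fun x hx => ?_)
  rw [← ENNReal.ofReal_rpow_of_nonneg (mul_nonneg (hρ₀ x hx) (norm_nonneg _)) hp₀,
    ENNReal.ofReal_mul (hρ₀ x hx)]
  gcongr
  exacts [hρ x.1 hx.1, hvert x]

end RegionBetween

lemma Omega_eq_regionBetween (n : ℕ) (ε : ℝ) (h1 h2 : Ep n → ℝ) (r : ℝ) :
    Omega n ε h1 h2 r =
      regionBetween (fun y => -ε / 2 + h2 y) (fun y => ε / 2 + h1 y) (ball 0 r) := by
  ext x
  simp [Omega, regionBetween]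

lemma OmegaHat_eq_regionBetween (n : ℕ) (ε : ℝ) (h1 h2 : Ep n → ℝ) (x₀ : Efull n) (s : ℝ) :
    OmegaHat n ε h1 h2 x₀ s =
      regionBetween (fun y => -ε / 2 + h2 y) (fun y => ε / 2 + h1 y)
        (ball 0 (1 / 2) ∩ ball x₀.1 s) := by
  ext x
  simp only [OmegaHat, Omega_eq_regionBetween, regionBetween, Set.mem_ofPred_eq, Set.mem_inter_iff,
    mem_ball_iff_norm]
  tauto

lemma integrableOn_OmegaHat_weight_mul {n : ℕ} {ε : ℝ} (hε : 0 ≤ ε) {h1 h2 : Ep n → ℝ}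
    {x₀ : Efull n} {s p : ℝ} (hp : 0 ≤ p) {u : Efull n → ℝ}
    (hu : IntegrableOn u (OmegaHat n ε h1 h2 x₀ s)) :
    IntegrableOn (fun x => (ε + ‖x.1‖ ^ 2) ^ p * u x) (OmegaHat n ε h1 h2 x₀ s) := by
  have hweight : Continuous fun x : Efull n => (ε + ‖x.1‖ ^ 2) ^ p :=
    Continuous.rpow_const (by fun_prop) fun _ => .inr hp
  have hsub : OmegaHat n ε h1 h2 x₀ s ⊆ {x | ‖x.1‖ < 1 / 2} := fun x hx => hx.1.1
  have hmeas : MeasurableSet {x : Efull n | ‖x.1‖ < 1 / 2} :=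
    (isOpen_lt (by fun_prop) continuous_const).measurableSet
  refine hu.bdd_mul (c := (ε + (1 / 2) ^ 2) ^ p) hweight.aestronglyMeasurable ?_
  filter_upwards [ae_restrict_of_ae_restrict_of_subset hsub (ae_restrict_mem hmeas)] with x hx
  rw [Real.norm_of_nonneg (by positivity)]
  gcongr

lemma OmegaHat_subset_Omega (n : ℕ) (ε : ℝ) (h1 h2 : Ep n → ℝ) (x₀ : Efull n) (s : ℝ) :
    OmegaHat n ε h1 h2 x₀ s ⊆ Omega n ε h1 h2 1 :=
  fun _ hx => ⟨hx.1.1.trans (by norm_num), hx.1.2⟩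

theorem stmt11_general {n : ℕ} {ε C₀ : ℝ} (hε : 0 ≤ ε) (hC₀ : 0 ≤ C₀) {h1 h2 : Ep n → ℝ}
    (h1_cont : ContinuousOn h1 (ball 0 (1 / 2))) (h2_cont : ContinuousOn h2 (ball 0 (1 / 2)))
    (hδ : ∀ y ∈ ball (0 : Ep n) (1 / 2), ε + h1 y - h2 y ≤ C₀ * (ε + ‖y‖ ^ 2))
    {F : Type*} [NormedAddCommGroup F] [NormedSpace ℝ F] {p : ℝ} (hp : 1 ≤ p)
    {x₀ : Efull n} {s : ℝ} {w : Efull n → F}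
    (hw : ContDiffOn ℝ 1 w (OmegaHat n ε h1 h2 x₀ s))
    (hw₀ : ∀ y ∈ ball (0 : Ep n) (1 / 2),
      Tendsto (fun t => w (y, t)) (𝓝[>] (-ε / 2 + h2 y)) (𝓝 0))
    (hint : IntegrableOn (fun x => ‖fderiv ℝ w x‖ ^ p) (OmegaHat n ε h1 h2 x₀ s)) :
    ∫ x in OmegaHat n ε h1 h2 x₀ s, ‖w x‖ ^ p ≤
      C₀ ^ p * ∫ x in OmegaHat n ε h1 h2 x₀ s, (ε + ‖x.1‖ ^ 2) ^ p * ‖fderiv ℝ w x‖ ^ p := by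
  have hsplit (x : Efull n) : (C₀ * (ε + ‖x.1‖ ^ 2) * ‖fderiv ℝ w x‖) ^ p =
      C₀ ^ p * ((ε + ‖x.1‖ ^ 2) ^ p * ‖fderiv ℝ w x‖ ^ p) := by
    rw [Real.mul_rpow (by positivity) (by positivity), Real.mul_rpow hC₀ (by positivity), mul_assoc]
  have hweighted := (integrableOn_OmegaHat_weight_mul hε (zero_le_one.trans hp) hint).const_mul
    (C₀ ^ p)
  rw [← integral_const_mul]
  simp only [OmegaHat_eq_regionBetween, ← hsplit] at hw hweighted ⊢
  have hbot : ContinuousOn (fun y => -ε / 2 + h2 y) (ball 0 (1 / 2)) :=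
    continuousOn_const.add h2_cont
  have htop : ContinuousOn (fun y => ε / 2 + h1 y) (ball 0 (1 / 2)) :=
    continuousOn_const.add h1_cont
  exact setIntegral_regionBetween_norm_rpow_le (ρ := fun y => C₀ * (ε + ‖y‖ ^ 2))
    (isOpen_ball.inter isOpen_ball) (hbot.mono Set.inter_subset_left)
    (htop.mono Set.inter_subset_left) hw (fun y hy => hw₀ y hy.1) hp
    (fun y hy => by linarith [hδ y hy.1]) hweighted

theorem stmt11 (C₀ : ℝ) (hC₀ : 1 ≤ C₀) :
    ∃ C : ℝ, 0 < C ∧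
      ∀ n : ℕ, 2 ≤ n → ∀ κ0 κ1 : ℝ, 0 < κ0 → 0 < κ1 →
      ∀ ε ∈ Set.Ioo (0:ℝ) 1, ∀ h1 h2 : Ep n → ℝ,
        HGeom n ε κ0 κ1 h1 h2 → DeltaComp n ε C₀ h1 h2 →
      ∀ m : ℕ, 1 ≤ m →
      ∀ x₀ ∈ Omega n ε h1 h2 (1/2), ∀ s ∈ Set.Ioc (0:ℝ) (1/2),
      ∀ w : Efull n → EuclideanSpace ℝ (Fin m),
        ContDiffOn ℝ 1 w (Omega n ε h1 h2 1) →
        (∀ y : Ep n, ‖y‖ < 1/2 →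
          ContinuousOn (fun t => w (y, t)) (Set.Icc (-ε/2 + h2 y) (ε/2 + h1 y)) ∧
          w (y, -ε/2 + h2 y) = 0) →
        IntegrableOn (fun x => ‖w x‖^2) (OmegaHat n ε h1 h2 x₀ s) →
        IntegrableOn (fun x => ‖fderiv ℝ w x‖^2) (OmegaHat n ε h1 h2 x₀ s) →
        (∫ x in OmegaHat n ε h1 h2 x₀ s, ‖w x‖^2) ≤
          C * ∫ x in OmegaHat n ε h1 h2 x₀ s, (ε + ‖x.1‖^2)^2 * ‖fderiv ℝ w x‖^2 := by
  refine ⟨C₀ ^ 2, by positivity, ?_⟩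
  intro n _ κ0 κ1 _ _ ε hε h1 h2 hgeom hδ m _ x₀ _ s _ w hw hbottom _ hint
  obtain ⟨h1_smooth, h2_smooth, hgap, -⟩ := hgeom
  have hball : ball (0 : Ep n) (1 / 2) ⊆ closedBall 0 1 :=
    ball_subset_closedBall.trans (closedBall_subset_closedBall (by norm_num))
  have hnorm {y : Ep n} (hy : y ∈ ball 0 (1 / 2)) : ‖y‖ ≤ 1 :=
    mem_closedBall_zero_iff.1 (hball hy)
  have htrace (y : Ep n) (hy : y ∈ ball 0 (1 / 2)) :
      Tendsto (fun t => w (y, t)) (𝓝[>] (-ε / 2 + h2 y)) (𝓝 0) := by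
    obtain ⟨hcont, hzero⟩ := hbottom y (mem_ball_zero_iff.1 hy)
    exact hzero ▸ (hcont _ (Set.left_mem_Icc.2 (hgap y (hnorm hy)).le)).mono_of_mem_nhdsWithin
      (Icc_mem_nhdsGT (hgap y (hnorm hy)))
  simpa only [Real.rpow_two] using stmt11_general hε.1.le (zero_le_one.trans hC₀)
    (h1_smooth.continuousOn.mono hball) (h2_smooth.continuousOn.mono hball)
    (fun y hy => (hδ y (hnorm hy)).2) one_le_two (hw.mono (OmegaHat_subset_Omega ..)) htrace
    (by simpa only [Real.rpow_two] using hint)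
end
end
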